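/- Let μ_1 and μ_2 be probability measures on ℝ^d, let r > 0, α_1, α_2 > 0 and K > 1. Let C_{K,d} = (8/Γ(d/2))·(d/(2e))^{d/2}·(1 + 1/(2K²)). Suppose that for all t ∈ [r/√2, K·α_1^{−1/2}·α_2^{−1/2}·r] and for i ∈ {1, 2} we have s_t(μ_i) ≤ α_i. Then s_r(μ_1 * μ_2) ≤ C_{K,d} · α_1 · α_2. -/

import Mathlib

open MeasureTheory Real

/-- Density of the centered Gaussian on `ℝ^d` with covariance matrix `y • I`. -/
noncomputable def gaussD (d : ℕ) (y : ℝ) (x : EuclideanSpace ℝ (Fin d)) : ℝ :=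
  (2 * Real.pi * y) ^ (-(d : ℝ) / 2) * Real.exp (-‖x‖ ^ 2 / (2 * y))

/-- `∂/∂y n_y (x)`. -/
noncomputable def gaussDy (d : ℕ) (y : ℝ) (x : EuclideanSpace ℝ (Fin d)) : ℝ :=
  deriv (fun u => gaussD d u x) y

/-- The detail of a measure `μ` on `ℝ^d` around the scale `r`,
`s_r(μ) = r² (Γ(d/2)/2) (d/(2e))^{-d/2} ‖μ * ∂/∂y n_y |_{y = r²}‖₁`. -/
noncomputable def detail (d : ℕ) (μ : Measure (EuclideanSpace ℝ (Fin d))) (r : ℝ) : ℝ :=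
  r ^ 2 * (Real.Gamma ((d : ℝ) / 2) / 2) * ((d : ℝ) / (2 * Real.exp 1)) ^ (-(d : ℝ) / 2) *
    ∫ x, |∫ z, gaussDy d (r ^ 2) (x - z) ∂μ|


noncomputable def gQ (d : ℕ) (y : ℝ) (x : EuclideanSpace ℝ (Fin d)) : ℝ :=
  gaussD d y x * (‖x‖ ^ 2 / (2 * y ^ 2) - d / (2 * y))

noncomputable def gH (d : ℕ) (y : ℝ) (x : EuclideanSpace ℝ (Fin d)) : ℝ :=
  gaussD d y x * ((‖x‖ ^ 2 / (2 * y ^ 2) - d / (2 * y)) ^ 2 - ‖x‖ ^ 2 / y ^ 3 + d / (2 * y ^ 2))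

lemma gaussD_hasDerivAt (d : ℕ) {y : ℝ} (hy : 0 < y) (x : EuclideanSpace ℝ (Fin d)) :
    HasDerivAt (fun u => gaussD d u x) (gQ d y x) y := by
  have hp : 0 < 2 * Real.pi * y := by positivity
  have h1 : HasDerivAt (fun u : ℝ => (2 * Real.pi * u) ^ (-(d : ℝ) / 2))
      ((2 * Real.pi * 1) * (-(d : ℝ) / 2) * (2 * Real.pi * y) ^ (-(d : ℝ) / 2 - 1)) y :=
    ((hasDerivAt_id y).const_mul (2 * Real.pi)).rpow_const (Or.inl hp.ne')
  have h2 : HasDerivAt (fun u : ℝ => Real.exp (-‖x‖ ^ 2 / (2 * u)))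
      (Real.exp (-‖x‖ ^ 2 / (2 * y)) * ((0 * (2 * y) - (-‖x‖ ^ 2) * (2 * 1)) / (2 * y) ^ 2)) y :=
    ((hasDerivAt_const y (-‖x‖ ^ 2)).div ((hasDerivAt_id y).const_mul 2) (by positivity)).exp
  have h3 := h1.mul h2
  refine h3.congr_deriv ?_
  rw [Real.rpow_sub_one hp.ne']
  unfold gQ gaussD
  field_simp
  ring

lemma gaussDy_eq (d : ℕ) {y : ℝ} (hy : 0 < y) (x : EuclideanSpace ℝ (Fin d)) :
    gaussDy d y x = gQ d y x := (gaussD_hasDerivAt d hy x).deriv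

lemma gQ_hasDerivAt (d : ℕ) {y : ℝ} (hy : 0 < y) (x : EuclideanSpace ℝ (Fin d)) :
    HasDerivAt (fun u => gQ d u x) (gH d y x) y := by
  have h1 := gaussD_hasDerivAt d hy x
  have h2 : HasDerivAt (fun u : ℝ => ‖x‖ ^ 2 / (2 * u ^ 2) - d / (2 * u))
      ((0 * (2 * y ^ 2) - ‖x‖ ^ 2 * (2 * ((2 : ℕ) * y ^ (2 - 1)))) / (2 * y ^ 2) ^ 2 -
       (0 * (2 * y) - d * (2 * 1)) / (2 * y) ^ 2) y :=
    ((hasDerivAt_const y (‖x‖ ^ 2)).div ((hasDerivAt_pow 2 y).const_mul 2) (by positivity)).sub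
    ((hasDerivAt_const y (d : ℝ)).div ((hasDerivAt_id y).const_mul 2) (by positivity))
  refine (h1.mul h2).congr_deriv ?_
  unfold gH gQ
  field_simp
  ring

lemma gaussD_nonneg (d : ℕ) {y : ℝ} (hy : 0 < y) (x : EuclideanSpace ℝ (Fin d)) :
    0 ≤ gaussD d y x := by unfold gaussD; positivity

lemma gaussD_cont (d : ℕ) (y : ℝ) : Continuous (gaussD d y) := by
  unfold gaussD; fun_prop

lemma gQ_cont (d : ℕ) (y : ℝ) : Continuous (gQ d y) := by
  unfold gQ gaussD; fun_prop

lemma gH_cont (d : ℕ) (y : ℝ) : Continuous (gH d y) := by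
  unfold gH gaussD; fun_prop

lemma gH_meas (d : ℕ) : Measurable (fun p : ℝ × EuclideanSpace ℝ (Fin d) => gH d p.1 p.2) := by
  unfold gH gaussD; fun_prop

lemma exp_aux1 {s : ℝ} (_hs : 0 ≤ s) : s * Real.exp (-s) ≤ 1 := by
  rw [Real.exp_neg, ← div_eq_mul_inv, div_le_one (Real.exp_pos s)]
  linarith [Real.add_one_le_exp s]

lemma exp_aux2 {s : ℝ} (hs : 0 ≤ s) : s ^ 2 * Real.exp (-s) ≤ 2 := by
  rw [Real.exp_neg, ← div_eq_mul_inv, div_le_iff₀ (Real.exp_pos s)]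
  linarith [Real.quadratic_le_exp_of_nonneg hs]

lemma gaussD_pre_le (d : ℕ) {a y : ℝ} (ha : 0 < a) (hy : a ≤ y) :
    (2 * Real.pi * y) ^ (-(d : ℝ) / 2) ≤ (2 * Real.pi * a) ^ (-(d : ℝ) / 2) := by
  apply Real.rpow_le_rpow_of_nonpos (by positivity)
  · gcongr
  · have : (0:ℝ) ≤ d := by positivity
    linarith

lemma gaussD_bound (d : ℕ) {a : ℝ} (ha : 0 < a) :
    ∃ C, ∀ y, a ≤ y → ∀ x, |gaussD d y x| ≤ C := by
  refine ⟨(2 * Real.pi * a) ^ (-(d : ℝ) / 2) * 1, fun y hy x => ?_⟩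
  have hy0 : 0 < y := ha.trans_le hy
  rw [abs_of_nonneg (gaussD_nonneg d hy0 x)]
  unfold gaussD
  refine mul_le_mul (gaussD_pre_le d ha hy) ?_ (by positivity) (by positivity)
  · rw [Real.exp_le_one_iff, neg_div]
    have : 0 ≤ ‖x‖ ^ 2 / (2 * y) := by positivity
    linarith

lemma gQ_bound (d : ℕ) {a : ℝ} (ha : 0 < a) :
    ∃ C, ∀ y, a ≤ y → ∀ x, |gQ d y x| ≤ C := by
  refine ⟨(2 * Real.pi * a) ^ (-(d : ℝ) / 2) * (1 / a * (1 + d / 2)), fun y hy x => ?_⟩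
  have hy0 : 0 < y := ha.trans_le hy
  unfold gQ gaussD
  rw [mul_assoc, abs_mul, abs_of_nonneg (a := (2 * Real.pi * y) ^ (-(d : ℝ) / 2)) (by positivity)]
  refine mul_le_mul (gaussD_pre_le d ha hy) ?_ (by positivity) (by positivity)
  set s := ‖x‖ ^ 2 / (2 * y) with hs
  have hs0 : 0 ≤ s := by positivity
  have e1 : rexp (-‖x‖ ^ 2 / (2 * y)) * (‖x‖ ^ 2 / (2 * y ^ 2) - d / (2 * y)) =
    1 / y * (s * rexp (-s) - d / 2 * rexp (-s)) := by
    rw [neg_div, ← hs]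
    have : ‖x‖ ^ 2 / (2 * y ^ 2) = s / y := by rw [hs]; field_simp
    rw [this]; field_simp
  rw [e1, abs_mul, abs_of_nonneg (a := 1 / y) (by positivity)]
  gcongr
  have := exp_aux1 hs0
  have h2 : rexp (-s) ≤ 1 := by rw [Real.exp_le_one_iff]; linarith
  have h3 : 0 ≤ s * rexp (-s) := by positivity
  have h4 : (d:ℝ) / 2 * rexp (-s) ≤ d / 2 := mul_le_of_le_one_right (by positivity) h2
  have h5 : 0 ≤ (d:ℝ) / 2 * rexp (-s) := by positivity
  rw [abs_le]; constructor <;> linarith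

lemma gH_bound (d : ℕ) {a : ℝ} (ha : 0 < a) :
    ∃ C, ∀ y, a ≤ y → ∀ x, |gH d y x| ≤ C := by
  refine ⟨(2 * Real.pi * a) ^ (-(d : ℝ) / 2) *
    (1 / a ^ 2 * (2 + (d + 2) + (d ^ 2 / 4 + d / 2))), fun y hy x => ?_⟩
  have hy0 : 0 < y := ha.trans_le hy
  unfold gH gaussD
  rw [mul_assoc, abs_mul, abs_of_nonneg (a := (2 * Real.pi * y) ^ (-(d : ℝ) / 2)) (by positivity)]
  refine mul_le_mul (gaussD_pre_le d ha hy) ?_ (by positivity) (by positivity)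
  set s := ‖x‖ ^ 2 / (2 * y) with hs
  have hs0 : 0 ≤ s := by positivity
  have e1 : rexp (-‖x‖ ^ 2 / (2 * y)) *
      ((‖x‖ ^ 2 / (2 * y ^ 2) - d / (2 * y)) ^ 2 - ‖x‖ ^ 2 / y ^ 3 + d / (2 * y ^ 2)) =
    1 / y ^ 2 * (s ^ 2 * rexp (-s) - (d + 2) * (s * rexp (-s))
      + (d ^ 2 / 4 + d / 2) * rexp (-s)) := by
    rw [neg_div, ← hs]
    have : ‖x‖ ^ 2 / (2 * y ^ 2) = s / y := by rw [hs]; field_simp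
    rw [this]
    have : ‖x‖ ^ 2 / y ^ 3 = 2 * s / y ^ 2 := by rw [hs]; field_simp
    rw [this]; field_simp; ring
  rw [e1, abs_mul, abs_of_nonneg (a := 1 / y ^ 2) (by positivity)]
  gcongr
  have := exp_aux1 hs0
  have := exp_aux2 hs0
  have h2 : rexp (-s) ≤ 1 := by rw [Real.exp_le_one_iff]; linarith
  have h3 : 0 ≤ s * rexp (-s) := by positivity
  have h3 : 0 ≤ s ^ 2 * rexp (-s) := by positivity
  have h4 : ((d:ℝ) ^ 2 / 4 + d / 2) * rexp (-s) ≤ (d:ℝ) ^ 2 / 4 + d / 2 :=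
    mul_le_of_le_one_right (by positivity) h2
  have h5 : 0 ≤ ((d:ℝ) ^ 2 / 4 + d / 2) * rexp (-s) := by positivity
  have h6 : ((d:ℝ) + 2) * (s * rexp (-s)) ≤ d + 2 :=
    mul_le_of_le_one_right (by positivity) (exp_aux1 hs0)
  have h7 : 0 ≤ ((d:ℝ) + 2) * (s * rexp (-s)) := by positivity
  have h8 : 0 ≤ (d:ℝ) ^ 2 / 4 + d / 2 := by positivity
  have h9 : (0:ℝ) ≤ d := by positivity
  rw [abs_le]; constructor <;> linarith

lemma G_hasDerivAt (d : ℕ) (y ρ : ℝ) :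
    HasDerivAt (fun ρ : ℝ => ρ ^ d * Real.exp (-(1 / (2 * y)) * ρ ^ 2))
      (d * ρ ^ (d - 1) * Real.exp (-(1 / (2 * y)) * ρ ^ 2) +
        ρ ^ d * (Real.exp (-(1 / (2 * y)) * ρ ^ 2) *
          (-(1 / (2 * y)) * ((2 : ℕ) * ρ ^ (2 - 1))))) ρ :=
  (hasDerivAt_pow d ρ).mul (((hasDerivAt_pow 2 ρ).const_mul (-(1 / (2 * y)))).exp)

lemma G_tendsto (d : ℕ) {y : ℝ} (hy : 0 < y) :
    Filter.Tendsto (fun ρ : ℝ => ρ ^ d * Real.exp (-(1 / (2 * y)) * ρ ^ 2)) Filter.atTop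
      (nhds 0) := by
  have h := rpow_mul_exp_neg_mul_sq_isLittleO_exp_neg (b := 1 / (2 * y)) (by positivity) (d : ℝ)
  simp only [Real.rpow_natCast] at h
  refine h.isBigO.trans_tendsto ?_
  refine Real.tendsto_exp_atBot.comp ?_
  exact Filter.tendsto_id.const_mul_atTop_of_neg (by norm_num)

/-- the radial integrand -/
lemma radial_eq (d : ℕ) (hd : 0 < d) {y ρ : ℝ} (hy : 0 < y) :
    ρ ^ (d - 1) * ((2 * Real.pi * y) ^ (-(d : ℝ) / 2) * Real.exp (-ρ ^ 2 / (2 * y)) *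
      (ρ ^ 2 / (2 * y ^ 2) - d / (2 * y))) =
    -((2 * Real.pi * y) ^ (-(d : ℝ) / 2) / (2 * y)) *
      (d * ρ ^ (d - 1) * Real.exp (-(1 / (2 * y)) * ρ ^ 2) +
        ρ ^ d * (Real.exp (-(1 / (2 * y)) * ρ ^ 2) *
          (-(1 / (2 * y)) * ((2 : ℕ) * ρ ^ (2 - 1))))) := by
  obtain ⟨k, rfl⟩ : ∃ k, d = k + 1 := ⟨d - 1, by omega⟩
  have : -ρ ^ 2 / (2 * y) = -(1 / (2 * y)) * ρ ^ 2 := by field_simp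
  rw [this]
  simp only [Nat.add_sub_cancel, pow_succ]
  push_cast
  field_simp
  ring

lemma radial_sign (d : ℕ) (hd : 0 < d) {y ρ : ℝ} (hy : 0 < y) :
      (d * ρ ^ (d - 1) * Real.exp (-(1 / (2 * y)) * ρ ^ 2) +
        ρ ^ d * (Real.exp (-(1 / (2 * y)) * ρ ^ 2) *
          (-(1 / (2 * y)) * ((2 : ℕ) * ρ ^ (2 - 1))))) =
      ρ ^ (d - 1) * Real.exp (-(1 / (2 * y)) * ρ ^ 2) / y * (d * y - ρ ^ 2) := by
  obtain ⟨k, rfl⟩ : ∃ k, d = k + 1 := ⟨d - 1, by omega⟩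
  simp only [Nat.add_sub_cancel, pow_succ]
  push_cast
  field_simp
  ring

lemma G_int (d : ℕ) (hd : 0 < d) {y : ℝ} (hy : 0 < y) :
    IntegrableOn (fun ρ : ℝ => |(d * ρ ^ (d - 1) * Real.exp (-(1 / (2 * y)) * ρ ^ 2) +
        ρ ^ d * (Real.exp (-(1 / (2 * y)) * ρ ^ 2) *
          (-(1 / (2 * y)) * ((2 : ℕ) * ρ ^ (2 - 1)))))|) (Set.Ioi 0) ∧
    ∫ ρ in Set.Ioi (0:ℝ), |(d * ρ ^ (d - 1) * Real.exp (-(1 / (2 * y)) * ρ ^ 2) +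
        ρ ^ d * (Real.exp (-(1 / (2 * y)) * ρ ^ 2) *
          (-(1 / (2 * y)) * ((2 : ℕ) * ρ ^ (2 - 1)))))| =
      2 * ((d * y) ^ ((d : ℝ) / 2) * Real.exp (-(d / 2))) := by
  set a := √(d * y) with ha
  have hdr : (0:ℝ) < d := by exact_mod_cast hd
  have ha0 : 0 < a := by rw [ha]; positivity
  have ha2 : a ^ 2 = d * y := Real.sq_sqrt (by positivity)
  set G : ℝ → ℝ := fun ρ : ℝ => ρ ^ d * Real.exp (-(1 / (2 * y)) * ρ ^ 2) with hG
  set G' : ℝ → ℝ := fun ρ : ℝ => (d * ρ ^ (d - 1) * Real.exp (-(1 / (2 * y)) * ρ ^ 2) +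
        ρ ^ d * (Real.exp (-(1 / (2 * y)) * ρ ^ 2) *
          (-(1 / (2 * y)) * ((2 : ℕ) * ρ ^ (2 - 1))))) with hG'
  have hder : ∀ ρ, HasDerivAt G (G' ρ) ρ := fun ρ => G_hasDerivAt d y ρ
  have hcont : Continuous G' := by rw [hG']; fun_prop
  have hsg : ∀ ρ, G' ρ = ρ ^ (d - 1) * Real.exp (-(1 / (2 * y)) * ρ ^ 2) / y * (d * y - ρ ^ 2) :=
    fun ρ => radial_sign d hd hy
  have hneg : ∀ ρ ∈ Set.Ioi a, G' ρ ≤ 0 := by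
    intro ρ hρ
    have h0 : 0 < ρ := ha0.trans hρ
    rw [hsg]
    apply mul_nonpos_of_nonneg_of_nonpos (by positivity)
    have : a ^ 2 ≤ ρ ^ 2 := by gcongr; exact le_of_lt hρ
    linarith
  have hpos : ∀ ρ ∈ Set.Ioc 0 a, 0 ≤ G' ρ := by
    intro ρ hρ
    have h0 : 0 < ρ := hρ.1
    rw [hsg]
    apply mul_nonneg (by positivity)
    have : ρ ^ 2 ≤ a ^ 2 := by gcongr; exact hρ.2
    linarith
  have hGa : G a = (d * y) ^ ((d : ℝ) / 2) * Real.exp (-(d / 2)) := by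
    rw [hG]
    simp only
    rw [ha2]
    congr 1
    · rw [ha, Real.sqrt_eq_rpow, ← Real.rpow_natCast, ← Real.rpow_mul (by positivity)]
      congr 1; ring
    · congr 1; field_simp
  have hG0 : G 0 = 0 := by simp [hG, hd.ne']
  have hun : Set.Ioi (0:ℝ) = Set.Ioc 0 a ∪ Set.Ioi a := (Set.Ioc_union_Ioi_eq_Ioi ha0.le).symm
  have i1 : IntegrableOn (fun ρ => |G' ρ|) (Set.Ioc 0 a) :=
    (hcont.abs.integrableOn_Icc).mono_set Set.Ioc_subset_Icc_self
  have i2' : IntegrableOn G' (Set.Ioi a) :=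
    integrableOn_Ioi_deriv_of_nonpos' (fun x _ => hder x) hneg (G_tendsto d hy)
  have i2 : IntegrableOn (fun ρ => |G' ρ|) (Set.Ioi a) := i2'.abs
  have e2 : ∫ ρ in Set.Ioi a, |G' ρ| = G a := by
    have h1 : ∫ ρ in Set.Ioi a, |G' ρ| = ∫ ρ in Set.Ioi a, - G' ρ :=
      setIntegral_congr_fun measurableSet_Ioi (fun ρ hρ => abs_of_nonpos (hneg ρ hρ))
    rw [h1, integral_neg, integral_Ioi_of_hasDerivAt_of_nonpos' (fun x _ => hder x) hneg
      (G_tendsto d hy)]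
    ring
  have e1 : ∫ ρ in Set.Ioc 0 a, |G' ρ| = G a := by
    have h1 : ∫ ρ in Set.Ioc 0 a, |G' ρ| = ∫ ρ in Set.Ioc 0 a, G' ρ :=
      setIntegral_congr_fun measurableSet_Ioc (fun ρ hρ => abs_of_nonneg (hpos ρ hρ))
    rw [h1, ← intervalIntegral.integral_of_le ha0.le,
      intervalIntegral.integral_eq_sub_of_hasDerivAt (fun x _ => hder x)
        (hcont.intervalIntegrable _ _), hG0, sub_zero]
  refine ⟨?_, ?_⟩
  · rw [hun]; exact i1.union i2
  · rw [hun, setIntegral_union (Set.Ioc_disjoint_Ioi le_rfl) measurableSet_Ioi i1 i2, e1, e2, hGa]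
    ring

lemma gQ_int (d : ℕ) (hd : 0 < d) {y : ℝ} (hy : 0 < y) :
    Integrable (gQ d y) ∧
    ∫ x, |gQ d y x| = 2 / (y * Real.Gamma ((d : ℝ) / 2)) *
      ((d : ℝ) / (2 * Real.exp 1)) ^ ((d : ℝ) / 2) := by
  have : Nonempty (Fin d) := ⟨⟨0, hd⟩⟩
  have : Nontrivial (EuclideanSpace ℝ (Fin d)) := inferInstance
  set f : ℝ → ℝ := fun ρ => |(2 * Real.pi * y) ^ (-(d : ℝ) / 2) * Real.exp (-ρ ^ 2 / (2 * y)) *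
      (ρ ^ 2 / (2 * y ^ 2) - d / (2 * y))| with hf
  have hfin : Module.finrank ℝ (EuclideanSpace ℝ (Fin d)) = d := by simp
  have hdr : (0:ℝ) < d := by exact_mod_cast hd
  have hc : 0 ≤ (2 * Real.pi * y) ^ (-(d : ℝ) / 2) / (2 * y) := by positivity
  have key : ∀ ρ ∈ Set.Ioi (0:ℝ), ρ ^ (d - 1) • f ρ =
     (2 * Real.pi * y) ^ (-(d : ℝ) / 2) / (2 * y) *
      |(d * ρ ^ (d - 1) * Real.exp (-(1 / (2 * y)) * ρ ^ 2) +
        ρ ^ d * (Real.exp (-(1 / (2 * y)) * ρ ^ 2) *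
          (-(1 / (2 * y)) * ((2 : ℕ) * ρ ^ (2 - 1)))))| := by
    intro ρ hρ
    have h0 : (0:ℝ) < ρ := hρ
    have h := congrArg abs (radial_eq d hd (ρ := ρ) hy)
    rw [abs_mul, abs_mul (-_), abs_neg, abs_of_nonneg hc,
      abs_of_nonneg (a := ρ ^ (d-1)) (by positivity)] at h
    rw [smul_eq_mul, hf]
    exact h
  obtain ⟨g1, g2⟩ := G_int d hd hy
  have hQ : ∀ x : EuclideanSpace ℝ (Fin d), |gQ d y x| = f ‖x‖ := fun x => rfl
  constructor
  · have : Integrable (fun x : EuclideanSpace ℝ (Fin d) => f ‖x‖) volume := by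
      rw [integrable_fun_norm_addHaar, hfin]
      rw [integrableOn_congr_fun key measurableSet_Ioi]
      exact g1.const_mul _
    refine (integrable_norm_iff (gQ_cont d y).aestronglyMeasurable).1 ?_
    exact this
  · simp_rw [hQ]
    rw [integral_fun_norm_addHaar, hfin, setIntegral_congr_fun measurableSet_Ioi key,
      integral_const_mul, g2, Measure.real, EuclideanSpace.volume_ball]
    simp only [Fintype.card_fin, ENNReal.ofReal_one, one_pow, one_mul]
    have hG : 0 < Real.Gamma ((d:ℝ) / 2) := Real.Gamma_pos_of_pos (by positivity)
    rw [Real.Gamma_add_one (by positivity), ENNReal.toReal_ofReal (by positivity)]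
    have e1 : √π ^ d = π ^ ((d:ℝ) / 2) := by
      rw [Real.sqrt_eq_rpow, ← Real.rpow_natCast, ← Real.rpow_mul (by positivity)]
      congr 1; ring
    have e2 : Real.exp (-((d:ℝ) / 2)) = (Real.exp 1 ^ ((d:ℝ) / 2))⁻¹ := by
      rw [Real.exp_one_rpow, Real.exp_neg]
    rw [e1, e2, neg_div, Real.rpow_neg (by positivity), Real.mul_rpow (by positivity) hy.le,
      Real.mul_rpow (by positivity) (by positivity), Real.mul_rpow (by positivity) hy.le,
      Real.div_rpow (by positivity) (by positivity), Real.mul_rpow (by positivity) (by positivity)]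
    have : 0 < π ^ ((d:ℝ) / 2) := by positivity
    have : 0 < y ^ ((d:ℝ) / 2) := by positivity
    have : 0 < (2:ℝ) ^ ((d:ℝ) / 2) := by positivity
    have : 0 < rexp 1 ^ ((d:ℝ) / 2) := by positivity
    simp only [nsmul_eq_mul, smul_eq_mul]
    generalize (d:ℝ) ^ ((d:ℝ) / 2) = D at *
    generalize (π:ℝ) ^ ((d:ℝ) / 2) = P at *
    generalize y ^ ((d:ℝ) / 2) = Y at *
    generalize (2:ℝ) ^ ((d:ℝ) / 2) = W at *
    generalize (rexp 1:ℝ) ^ ((d:ℝ) / 2) = Z at *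
    generalize Real.Gamma ((d:ℝ) / 2) = GG at *
    field_simp
    try ring

lemma Gamma_step {x : ℝ} (hx : 0 < x) (h : Real.Gamma x ≤ 8 * (x / Real.exp 1) ^ x) :
    Real.Gamma (x + 1) ≤ 8 * ((x + 1) / Real.exp 1) ^ (x + 1) := by
  rw [Real.Gamma_add_one hx.ne']
  have h1 : x * (x / Real.exp 1) ^ x ≤ ((x + 1) / Real.exp 1) ^ (x + 1) := by
    have hx1 : 0 < x + 1 := by linarith
    rw [← Real.log_le_log_iff (by positivity) (by positivity), Real.log_mul (by positivity)
      (by positivity), Real.log_rpow (by positivity), Real.log_rpow (by positivity),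
      Real.log_div (by positivity) (by positivity), Real.log_div (by positivity) (by positivity),
      Real.log_exp]
    have h2 : Real.log (x / (x + 1)) ≤ x / (x + 1) - 1 := Real.log_le_sub_one_of_pos (by positivity)
    rw [Real.log_div hx.ne' hx1.ne'] at h2
    have h3 : (x + 1) * (Real.log x - Real.log (x + 1)) ≤ (x + 1) * (x / (x + 1) - 1) := by
      gcongr
    have h4 : (x + 1) * (x / (x + 1) - 1) = -1 := by field_simp; ring
    nlinarith
  nlinarith

lemma Gamma_bound : ∀ n : ℕ,
    Real.Gamma (((n + 1 : ℕ) : ℝ) / 2) ≤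
      8 * ((((n + 1 : ℕ) : ℝ) / 2) / Real.exp 1) ^ (((n + 1 : ℕ) : ℝ) / 2) ∧
    Real.Gamma (((n + 2 : ℕ) : ℝ) / 2) ≤
      8 * ((((n + 2 : ℕ) : ℝ) / 2) / Real.exp 1) ^ (((n + 2 : ℕ) : ℝ) / 2)
  | 0 => by
    have he := Real.exp_one_lt_d9
    have he0 := Real.exp_pos 1
    constructor
    · norm_num only [Nat.cast_one, zero_add]
      rw [Real.Gamma_one_half_eq, ← Real.sqrt_eq_rpow]
      have h1 : √π ≤ 2 := by
        rw [Real.sqrt_le_left (by norm_num)]; nlinarith [Real.pi_lt_four]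
      have h2 : (1/3 : ℝ) ≤ √(1 / 2 / rexp 1) := by
        apply Real.le_sqrt_of_sq_le
        rw [le_div_iff₀ he0]; linarith
      linarith
    · norm_num
      rw [← div_eq_mul_inv, le_div_iff₀ he0]; linarith
  | n + 1 => by
    obtain ⟨h1, h2⟩ := Gamma_bound n
    refine ⟨h2, ?_⟩
    have := Gamma_step (by positivity) h1
    have e : (((n + 1 : ℕ) : ℝ) / 2) + 1 = ((n + 1 + 2 : ℕ) : ℝ) / 2 := by push_cast; ring
    rwa [e] at this

lemma gaussD_integrable (d : ℕ) {y : ℝ} (hy : 0 < y) : Integrable (gaussD d y) := by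
  have h := GaussianFourier.integral_rexp_neg_mul_sq_norm (V := EuclideanSpace ℝ (Fin d))
    (b := 1 / (2 * y)) (by positivity)
  have h1 : Integrable (fun x : EuclideanSpace ℝ (Fin d) => rexp (-(1 / (2 * y)) * ‖x‖ ^ 2)) := by
    apply Integrable.of_integral_ne_zero
    rw [h]; positivity
  have h2 := h1.const_mul ((2 * Real.pi * y) ^ (-(d : ℝ) / 2))
  refine h2.congr (Filter.Eventually.of_forall fun x => ?_)
  simp only [gaussD]
  congr 2
  field_simp

lemma gauss_sq (d : ℕ) {u v : ℝ} (hu : 0 < u) (hv : 0 < v) (x w : EuclideanSpace ℝ (Fin d)) :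
    -‖x - w‖ ^ 2 / (2 * u) + -‖w‖ ^ 2 / (2 * v) =
    -‖x‖ ^ 2 / (2 * (u + v)) + -((u + v) / (2 * u * v)) * ‖w - (v / (u + v)) • x‖ ^ 2 := by
  rw [norm_sub_sq_real, norm_sub_sq_real, inner_smul_right, norm_smul, real_inner_comm w x,
    Real.norm_of_nonneg (by positivity)]
  field_simp
  ring

lemma gauss_conv (d : ℕ) {u v : ℝ} (hu : 0 < u) (hv : 0 < v) (x : EuclideanSpace ℝ (Fin d)) :
    ∫ w, gaussD d u (x - w) * gaussD d v w = gaussD d (u + v) x := by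
  have h1 : ∀ w, gaussD d u (x - w) * gaussD d v w =
      ((2 * Real.pi * u) ^ (-(d : ℝ) / 2) * (2 * Real.pi * v) ^ (-(d : ℝ) / 2) *
        rexp (-‖x‖ ^ 2 / (2 * (u + v)))) *
      rexp (-((u + v) / (2 * u * v)) * ‖w - (v / (u + v)) • x‖ ^ 2) := by
    intro w
    unfold gaussD
    rw [mul_assoc _ (rexp _) (rexp _), ← Real.exp_add, ← gauss_sq d hu hv, Real.exp_add]
    ring
  simp_rw [h1]
  rw [integral_const_mul, integral_sub_right_eq_self
    (fun w : EuclideanSpace ℝ (Fin d) => rexp (-((u + v) / (2 * u * v)) * ‖w‖ ^ 2)),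
    GaussianFourier.integral_rexp_neg_mul_sq_norm (by positivity)]
  unfold gaussD
  simp only [finrank_euclideanSpace, Fintype.card_fin]
  have e : (2 * π * u) ^ (-(d:ℝ) / 2) * (2 * π * v) ^ (-(d:ℝ) / 2) *
     (π / ((u + v) / (2 * u * v))) ^ ((d:ℝ) / 2) = (2 * π * (u + v)) ^ (-(d:ℝ) / 2) := by
    have : (π / ((u + v) / (2 * u * v))) ^ ((d:ℝ) / 2) =
      ((u + v) / (2 * u * v) / π) ^ (-(d:ℝ) / 2) := by
      rw [neg_div, Real.rpow_neg (by positivity), ← Real.inv_rpow (by positivity), inv_div]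
    rw [this, ← Real.mul_rpow (by positivity) (by positivity),
      ← Real.mul_rpow (by positivity) (by positivity)]
    congr 1
    field_simp
  rw [← e]; ring

lemma conv_hasDerivAt (d : ℕ) (g : EuclideanSpace ℝ (Fin d) → ℝ) (hg : Integrable g)
    {v : ℝ} (hv : 0 < v) (T : EuclideanSpace ℝ (Fin d) → EuclideanSpace ℝ (Fin d))
    (hT : Continuous T) :
    HasDerivAt (fun v => ∫ w, g w * gaussD d v (T w)) (∫ w, g w * gQ d v (T w)) v := by
  obtain ⟨C, hC⟩ := gQ_bound d (a := v / 2) (by positivity)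
  obtain ⟨C', hC'⟩ := gaussD_bound d (a := v / 2) (by positivity)
  refine (hasDerivAt_integral_of_dominated_loc_of_deriv_le (s := Set.Ici (v / 2))
    (bound := fun w => ‖g w‖ * C) (F := fun v w => g w * gaussD d v (T w))
    (F' := fun v w => g w * gQ d v (T w)) (Ici_mem_nhds (by linarith)) ?_ ?_ ?_ ?_ ?_ ?_).2
  · refine Filter.Eventually.of_forall fun y => ?_
    exact hg.aestronglyMeasurable.mul ((gaussD_cont d y).comp hT).aestronglyMeasurable
  · exact hg.mul_bdd (c := C') ((gaussD_cont d v).comp hT).aestronglyMeasurable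
      (Filter.Eventually.of_forall fun w => hC' v (by linarith) _)
  · exact hg.aestronglyMeasurable.mul ((gQ_cont d v).comp hT).aestronglyMeasurable
  · refine Filter.Eventually.of_forall fun w y hy => ?_
    rw [norm_mul]
    gcongr
    exact hC y hy _
  · exact hg.norm.mul_const _
  · refine Filter.Eventually.of_forall fun w y hy => ?_
    have : 0 < y := lt_of_lt_of_le (by positivity) hy
    exact (gaussD_hasDerivAt d this (T w)).const_mul (g w)

lemma gQ_conv (d : ℕ) {u v : ℝ} (hu : 0 < u) (hv : 0 < v) (x : EuclideanSpace ℝ (Fin d)) :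
    ∫ w, gQ d u (x - w) * gaussD d v w = gQ d (u + v) x := by
  have h1 := conv_hasDerivAt d (gaussD d v) (gaussD_integrable d hv) hu (fun w => x - w)
    (by fun_prop)
  have h2 : HasDerivAt (fun u => gaussD d (u + v) x) (gQ d (u + v) x) u :=
    HasDerivAt.comp_add_const u v (gaussD_hasDerivAt d (by positivity : 0 < u + v) x)
  have h3 : (fun u => ∫ w, gaussD d v w * gaussD d u (x - w)) =ᶠ[nhds u]
      (fun u => gaussD d (u + v) x) := by
    filter_upwards [lt_mem_nhds hu] with a ha
    rw [← gauss_conv d ha hv]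
    simp_rw [mul_comm]
  have h4 := (h1.congr_of_eventuallyEq h3.symm).unique h2
  rw [← h4]
  simp_rw [mul_comm]

lemma gH_conv (d : ℕ) (hd : 0 < d) {u v : ℝ} (hu : 0 < u) (hv : 0 < v)
    (x : EuclideanSpace ℝ (Fin d)) :
    ∫ w, gQ d u (x - w) * gQ d v w = gH d (u + v) x := by
  have h1 := conv_hasDerivAt d (fun w => gQ d u (x - w)) ((gQ_int d hd hu).1.comp_sub_left x) hv
    (fun w => w) (by fun_prop)
  have h2 : HasDerivAt (fun v => gQ d (u + v) x) (gH d (u + v) x) v :=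
    HasDerivAt.comp_const_add u v (gQ_hasDerivAt d (by positivity : 0 < u + v) x)
  have h3 : (fun v => ∫ w, gQ d u (x - w) * gaussD d v w) =ᶠ[nhds v]
      (fun v => gQ d (u + v) x) := by
    filter_upwards [lt_mem_nhds hv] with a ha
    rw [← gQ_conv d hu ha]
  exact (h1.congr_of_eventuallyEq h3.symm).unique h2

lemma integrable_shift {d : ℕ} {β : Type*} [MeasurableSpace β] (ν : Measure β) [IsFiniteMeasure ν]
    (f : EuclideanSpace ℝ (Fin d) → ℝ) (hf : Integrable f) (hc : Measurable f)
    (T : β → EuclideanSpace ℝ (Fin d)) (hT : Measurable T) :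
    Integrable (fun p : EuclideanSpace ℝ (Fin d) × β => f (p.1 - T p.2)) (volume.prod ν) := by
  have hm : Measurable (fun p : EuclideanSpace ℝ (Fin d) × β => f (p.1 - T p.2)) :=
    hc.comp (measurable_fst.sub (hT.comp measurable_snd))
  rw [integrable_prod_iff' hm.aestronglyMeasurable]
  constructor
  · exact Filter.Eventually.of_forall fun z => hf.comp_sub_right (T z)
  · have : ∀ z, ∫ x, ‖f (x - T z)‖ = ∫ x, ‖f x‖ := fun z =>
      integral_sub_right_eq_self (fun x => ‖f x‖) (T z)
    simp only [this]
    exact integrable_const _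

noncomputable def gF (d : ℕ) (μ : Measure (EuclideanSpace ℝ (Fin d))) (y : ℝ)
    (x : EuclideanSpace ℝ (Fin d)) : ℝ := ∫ z, gQ d y (x - z) ∂μ

noncomputable def gM (d : ℕ) (μ : Measure (EuclideanSpace ℝ (Fin d))) (y : ℝ)
    (x : EuclideanSpace ℝ (Fin d)) : ℝ := ∫ z, gH d y (x - z) ∂μ

lemma gF_integrable (d : ℕ) (hd : 0 < d) (μ : Measure (EuclideanSpace ℝ (Fin d)))
    [IsProbabilityMeasure μ] {y : ℝ} (hy : 0 < y) : Integrable (gF d μ y) :=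
  (integrable_shift μ (gQ d y) (gQ_int d hd hy).1 (gQ_cont d y).measurable id
    measurable_id).integral_prod_left

lemma gF_norm_le (d : ℕ) (hd : 0 < d) (μ : Measure (EuclideanSpace ℝ (Fin d)))
    [IsProbabilityMeasure μ] {y : ℝ} (hy : 0 < y) :
    ∫ x, |gF d μ y x| ≤ ∫ x, |gQ d y x| := by
  have h := integrable_shift μ (gQ d y) (gQ_int d hd hy).1 (gQ_cont d y).measurable id
    measurable_id
  calc ∫ x, |gF d μ y x| ≤ ∫ x, ∫ z, |gQ d y (x - z)| ∂μ := by
        apply integral_mono (gF_integrable d hd μ hy).abs h.abs.integral_prod_left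
        intro x
        exact abs_integral_le_integral_abs
    _ = ∫ z, (∫ x, |gQ d y (x - z)|) ∂μ := integral_integral_swap h.abs
    _ = ∫ z, (∫ x, |gQ d y x|) ∂μ := by
        congr 1; ext z
        exact integral_sub_right_eq_self (fun x => |gQ d y x|) z
    _ = ∫ x, |gQ d y x| := by simp

lemma gM_conv (d : ℕ) (hd : 0 < d) (μ₁ μ₂ : Measure (EuclideanSpace ℝ (Fin d)))
    [IsProbabilityMeasure μ₁] [IsProbabilityMeasure μ₂] {u : ℝ} (hu : 0 < u)
    (x : EuclideanSpace ℝ (Fin d)) :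
    gM d (μ₁ ∗ μ₂) (u + u) x = ∫ w, gF d μ₂ u w * gF d μ₁ u (x - w) := by
  obtain ⟨C, hC⟩ := gH_bound d (a := u + u) (by positivity)
  obtain ⟨C', hC'⟩ := gQ_bound d (a := u) (by positivity)
  have hbd : ∀ {β : Type} [MeasurableSpace β] (ν : Measure β) [IsFiniteMeasure ν]
      (T : β → EuclideanSpace ℝ (Fin d)) (_ : Measurable T),
      Integrable (fun z => gH d (u + u) (T z)) ν := by
    intro β _ ν _ T hT
    exact Integrable.of_bound (C := C) ((gH_cont d _).measurable.comp hT).aestronglyMeasurable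
      (Filter.Eventually.of_forall fun z => hC _ le_rfl _)
  unfold gM
  rw [integral_conv (hbd _ _ (by fun_prop))]
  have h1 : ∫ z₁, ∫ z₂, gH d (u + u) (x - (z₁ + z₂)) ∂μ₂ ∂μ₁ =
      ∫ p, gH d (u + u) (x - (p.1 + p.2)) ∂(μ₁.prod μ₂) := by
    rw [integral_prod]
    exact hbd _ _ (by fun_prop)
  rw [h1]
  have h2 : ∀ p : EuclideanSpace ℝ (Fin d) × EuclideanSpace ℝ (Fin d),
      gH d (u + u) (x - (p.1 + p.2)) = ∫ w, gQ d u (x - w - p.1) * gQ d u (w - p.2) := by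
    intro p
    rw [← gH_conv d hd hu hu, ← integral_sub_right_eq_self _ p.2]
    congr 1; ext w
    congr 2; abel
  simp_rw [h2]
  have hi : Integrable (fun q : EuclideanSpace ℝ (Fin d) × (EuclideanSpace ℝ (Fin d) ×
      EuclideanSpace ℝ (Fin d)) => gQ d u (x - q.1 - q.2.1) * gQ d u (q.1 - q.2.2))
      (volume.prod (μ₁.prod μ₂)) := by
    refine (integrable_shift (μ₁.prod μ₂) (gQ d u) (gQ_int d hd hu).1 (gQ_cont d u).measurable
      Prod.snd measurable_snd).bdd_mul (c := C') ?_ ?_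
    · exact ((gQ_cont d u).comp (by fun_prop)).aestronglyMeasurable
    · exact Filter.Eventually.of_forall fun z => hC' _ le_rfl _
  rw [← integral_integral_swap hi]
  congr 1; ext w
  rw [integral_prod_mul (fun z => gQ d u (x - w - z)) (fun z => gQ d u (w - z)), mul_comm]
  rfl

lemma gM_norm_le (d : ℕ) (hd : 0 < d) (μ₁ μ₂ : Measure (EuclideanSpace ℝ (Fin d)))
    [IsProbabilityMeasure μ₁] [IsProbabilityMeasure μ₂] {u : ℝ} (hu : 0 < u) :
    ∫⁻ x, ‖gM d (μ₁ ∗ μ₂) (u + u) x‖ₑ ≤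
      ENNReal.ofReal ((∫ x, |gF d μ₁ u x|) * (∫ x, |gF d μ₂ u x|)) := by
  have h := (gF_integrable d hd μ₂ hu).convolution_integrand (ContinuousLinearMap.mul ℝ ℝ)
    (gF_integrable d hd μ₁ hu)
  simp only [ContinuousLinearMap.mul_apply'] at h
  have hM : gM d (μ₁ ∗ μ₂) (u + u) = fun x => ∫ w, gF d μ₂ u w * gF d μ₁ u (x - w) := by
    ext x; exact gM_conv d hd μ₁ μ₂ hu x
  have hi : Integrable (gM d (μ₁ ∗ μ₂) (u + u)) := by
    rw [hM]; exact h.integral_prod_left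
  rw [← ofReal_integral_norm_eq_lintegral_enorm hi]
  apply ENNReal.ofReal_le_ofReal
  calc ∫ x, ‖gM d (μ₁ ∗ μ₂) (u + u) x‖
      ≤ ∫ x, ∫ w, |gF d μ₂ u w * gF d μ₁ u (x - w)| := by
        apply integral_mono hi.norm h.abs.integral_prod_left
        intro x
        simp only [hM]
        exact abs_integral_le_integral_abs
    _ = ∫ w, ∫ x, |gF d μ₂ u w * gF d μ₁ u (x - w)| := integral_integral_swap h.abs
    _ = ∫ w, |gF d μ₂ u w| * ∫ x, |gF d μ₁ u x| := by
        congr 1; ext w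
        simp_rw [abs_mul]
        rw [integral_const_mul, integral_sub_right_eq_self (fun x => |gF d μ₁ u x|)]
    _ = _ := by rw [integral_mul_const, mul_comm]

lemma gM_meas (d : ℕ) (μ : Measure (EuclideanSpace ℝ (Fin d))) [IsProbabilityMeasure μ] :
    StronglyMeasurable (fun p : ℝ × EuclideanSpace ℝ (Fin d) => gM d μ p.1 p.2) := by
  have : Measurable (fun q : (ℝ × EuclideanSpace ℝ (Fin d)) × EuclideanSpace ℝ (Fin d) =>
    gH d q.1.1 (q.1.2 - q.2)) :=
    (gH_meas d).comp (measurable_fst.fst.prodMk (measurable_fst.snd.sub measurable_snd))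
  exact this.stronglyMeasurable.integral_prod_right

lemma gF_ftc (d : ℕ) (μ : Measure (EuclideanSpace ℝ (Fin d))) [IsProbabilityMeasure μ]
    {a b : ℝ} (ha : 0 < a) (hab : a ≤ b) (x : EuclideanSpace ℝ (Fin d)) :
    gF d μ b x - gF d μ a x = ∫ y in Set.Ioc a b, gM d μ y x := by
  obtain ⟨C, hC⟩ := gH_bound d ha
  obtain ⟨C', hC'⟩ := gQ_bound d ha
  have hQ : ∀ y, a ≤ y → Integrable (fun z => gQ d y (x - z)) μ := by
    intro y hy
    exact Integrable.of_bound (C := C') ((gQ_cont d y).comp (by fun_prop)).aestronglyMeasurable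
      (Filter.Eventually.of_forall fun z => hC' _ hy _)
  have hF : ∀ z, gQ d b z - gQ d a z = ∫ y in Set.Ioc a b, gH d y z := by
    intro z
    rw [← intervalIntegral.integral_of_le hab,
      intervalIntegral.integral_eq_sub_of_hasDerivAt (f := fun y => gQ d y z)]
    · intro y hy
      rw [Set.uIcc_of_le hab] at hy
      exact gQ_hasDerivAt d (ha.trans_le hy.1) z
    · rw [intervalIntegrable_iff_integrableOn_Ioc_of_le hab]
      refine Measure.integrableOn_of_bounded (M := C) (by simp) ?_ ?_
      · exact ((gH_meas d).comp (measurable_id.prodMk measurable_const)).aestronglyMeasurable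
      · filter_upwards [ae_restrict_mem measurableSet_Ioc] with y hy
        exact hC y hy.1.le _
  unfold gF gM
  rw [← integral_sub (hQ b hab) (hQ a le_rfl)]
  simp_rw [hF]
  apply integral_integral_swap
  refine Integrable.of_bound (C := C) ?_ ?_
  · exact ((gH_meas d).comp
      (measurable_snd.prodMk (measurable_const.sub measurable_fst))).aestronglyMeasurable
  · have h1 : ∀ᵐ q : EuclideanSpace ℝ (Fin d) × ℝ ∂(μ.prod (volume.restrict (Set.Ioc a b))),
        q.2 ∈ Set.Ioc a b :=
      Measure.quasiMeasurePreserving_snd.ae (ae_restrict_mem measurableSet_Ioc)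
    filter_upwards [h1] with q hq
    exact hC _ hq.1.le _

lemma gF_main (d : ℕ) (hd : 0 < d) (μ₁ μ₂ : Measure (EuclideanSpace ℝ (Fin d)))
    [IsProbabilityMeasure μ₁] [IsProbabilityMeasure μ₂] {a b B : ℝ} (ha : 0 < a) (hab : a ≤ b)
    (hB : 0 ≤ B)
    (h : ∀ y ∈ Set.Ioc a b,
      (∫ x, |gF d μ₁ (y / 2) x|) * (∫ x, |gF d μ₂ (y / 2) x|) ≤ B / y ^ 2) :
    ∫ x, |gF d (μ₁ ∗ μ₂) a x| ≤ (∫ x, |gF d (μ₁ ∗ μ₂) b x|) + B / a := by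
  have hb : 0 < b := ha.trans_le hab
  have ia := gF_integrable d hd (μ₁ ∗ μ₂) ha
  have ib := gF_integrable d hd (μ₁ ∗ μ₂) hb
  have hint : IntegrableOn (fun y : ℝ => B / y ^ 2) (Set.Ioc a b) := by
    refine (ContinuousOn.integrableOn_Icc ?_).mono_set Set.Ioc_subset_Icc_self
    intro y hy
    have : y ^ 2 ≠ 0 := (pow_pos (ha.trans_le hy.1) 2).ne'
    exact (ContinuousAt.div (f := fun _ : ℝ => B) (g := fun y : ℝ => y ^ 2) (by fun_prop)
      (by fun_prop) this).continuousWithinAt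
  have hval : ∫ y in Set.Ioc a b, B / y ^ 2 ≤ B / a := by
    rw [← intervalIntegral.integral_of_le hab,
      intervalIntegral.integral_eq_sub_of_hasDerivAt (f := fun y => - (B / y))]
    · have : 0 ≤ B / b := by positivity
      linarith
    · intro y hy
      rw [Set.uIcc_of_le hab] at hy
      have hy0 : 0 < y := ha.trans_le hy.1
      refine (((hasDerivAt_const y B).div (hasDerivAt_id y) hy0.ne').neg).congr_deriv ?_
      simp only [id]
      field_simp
      ring
    · rw [intervalIntegrable_iff_integrableOn_Ioc_of_le hab]; exact hint
  have hnn : 0 ≤ (∫ x, |gF d (μ₁ ∗ μ₂) b x|) := integral_nonneg fun _ => abs_nonneg _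
  rw [← ENNReal.ofReal_le_ofReal_iff (by positivity), ENNReal.ofReal_add hnn (by positivity)]
  have ea := ofReal_integral_norm_eq_lintegral_enorm ia
  have eb := ofReal_integral_norm_eq_lintegral_enorm ib
  simp only [Real.norm_eq_abs] at ea eb
  rw [ea, eb]
  have hm := (gM_meas d (μ₁ ∗ μ₂)).measurable
  calc ∫⁻ x, ‖gF d (μ₁ ∗ μ₂) a x‖ₑ
      ≤ ∫⁻ x, (‖gF d (μ₁ ∗ μ₂) b x‖ₑ + ∫⁻ y in Set.Ioc a b, ‖gM d (μ₁ ∗ μ₂) y x‖ₑ) := by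
        apply lintegral_mono
        intro x
        have := gF_ftc d (μ₁ ∗ μ₂) ha hab x
        have e : gF d (μ₁ ∗ μ₂) a x = gF d (μ₁ ∗ μ₂) b x -
          ∫ y in Set.Ioc a b, gM d (μ₁ ∗ μ₂) y x := by rw [← this]; ring
        simp only
        rw [e]
        refine (enorm_sub_le).trans ?_
        gcongr
        exact enorm_integral_le_lintegral_enorm _
    _ = (∫⁻ x, ‖gF d (μ₁ ∗ μ₂) b x‖ₑ) +
          ∫⁻ x, ∫⁻ y in Set.Ioc a b, ‖gM d (μ₁ ∗ μ₂) y x‖ₑ :=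
        lintegral_add_left' ib.aestronglyMeasurable.enorm _
    _ = (∫⁻ x, ‖gF d (μ₁ ∗ μ₂) b x‖ₑ) +
          ∫⁻ y in Set.Ioc a b, ∫⁻ x, ‖gM d (μ₁ ∗ μ₂) y x‖ₑ := by
        congr 1
        apply lintegral_lintegral_swap
        exact (hm.comp measurable_swap).enorm.aemeasurable
    _ ≤ (∫⁻ x, ‖gF d (μ₁ ∗ μ₂) b x‖ₑ) + ∫⁻ y in Set.Ioc a b, ENNReal.ofReal (B / y ^ 2) := by
        refine add_le_add le_rfl ?_
        apply setLIntegral_mono' measurableSet_Ioc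
        intro y hy
        have hy0 : 0 < y := ha.trans hy.1
        have := gM_norm_le d hd μ₁ μ₂ (u := y / 2) (by positivity)
        rw [add_halves] at this
        exact this.trans (ENNReal.ofReal_le_ofReal (h y hy))
    _ = (∫⁻ x, ‖gF d (μ₁ ∗ μ₂) b x‖ₑ) +
          ENNReal.ofReal (∫ y in Set.Ioc a b, B / y ^ 2) := by
        congr 1
        rw [ofReal_integral_eq_lintegral_ofReal hint]
        exact Filter.Eventually.of_forall fun y => by positivity
    _ ≤ _ := by gcongr

lemma detail_eq (d : ℕ) (μ : Measure (EuclideanSpace ℝ (Fin d))) {r : ℝ} (hr : 0 < r) :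
    detail d μ r = r ^ 2 * (Real.Gamma ((d : ℝ) / 2) / 2) *
      (((d : ℝ) / (2 * Real.exp 1)) ^ ((d : ℝ) / 2))⁻¹ * ∫ x, |gF d μ (r ^ 2) x| := by
  unfold detail gF
  have hy : 0 < r ^ 2 := by positivity
  simp_rw [gaussDy_eq d hy]
  rw [neg_div, Real.rpow_neg (by positivity)]

theorem statement3 {d : ℕ} (μ₁ μ₂ : Measure (EuclideanSpace ℝ (Fin d)))
    [IsProbabilityMeasure μ₁] [IsProbabilityMeasure μ₂]
    (r α₁ α₂ K : ℝ) (hr : 0 < r) (hα₁ : 0 < α₁) (hα₂ : 0 < α₂) (hK : 1 < K)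
    (h : ∀ t ∈ Set.Icc (r / Real.sqrt 2) (K * α₁ ^ (-(1 : ℝ) / 2) * α₂ ^ (-(1 : ℝ) / 2) * r),
      detail d μ₁ t ≤ α₁ ∧ detail d μ₂ t ≤ α₂) :
    detail d (μ₁ ∗ μ₂) r ≤
      (8 / Real.Gamma ((d : ℝ) / 2) * ((d : ℝ) / (2 * Real.exp 1)) ^ ((d : ℝ) / 2) *
        (1 + 1 / (2 * K ^ 2))) * α₁ * α₂ := by
  rcases Nat.eq_zero_or_pos d with rfl | hd
  · simp [detail]
  have hdr : (0:ℝ) < d := by exact_mod_cast hd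
  have hg : 0 < Real.Gamma ((d:ℝ) / 2) := Real.Gamma_pos_of_pos (by positivity)
  have hD : 0 < ((d : ℝ) / (2 * Real.exp 1)) ^ ((d : ℝ) / 2) := by positivity
  have hgD : Real.Gamma ((d:ℝ) / 2) ≤ 8 * ((d : ℝ) / (2 * Real.exp 1)) ^ ((d : ℝ) / 2) := by
    obtain ⟨k, rfl⟩ : ∃ k, d = k + 1 := ⟨d - 1, by omega⟩
    have := (Gamma_bound k).1
    rwa [div_div] at this
  have hN : ∀ {y : ℝ}, 0 < y → ∫ x, |gF d (μ₁ ∗ μ₂) y x| ≤ 2 / (y * Real.Gamma ((d : ℝ) / 2)) *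
      ((d : ℝ) / (2 * Real.exp 1)) ^ ((d : ℝ) / 2) := fun hy =>
    (gF_norm_le d hd (μ₁ ∗ μ₂) hy).trans_eq (gQ_int d hd hy).2
  have hdet : ∀ (μ : Measure (EuclideanSpace ℝ (Fin d))) (t : ℝ), 0 < t → detail d μ t =
    t ^ 2 * (Real.Gamma ((d : ℝ) / 2) / 2) *
      (((d : ℝ) / (2 * Real.exp 1)) ^ ((d : ℝ) / 2))⁻¹ * ∫ x, |gF d μ (t ^ 2) x| :=
    fun μ t ht => detail_eq d μ ht
  rw [hdet _ _ hr]
  generalize Real.Gamma ((d:ℝ) / 2) = g at *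
  generalize ((d : ℝ) / (2 * Real.exp 1)) ^ ((d : ℝ) / 2) = D at *
  have hK0 : 0 < K := by linarith
  have h1 : 1 ≤ 8 * D / g := by rw [le_div_iff₀ hg]; linarith
  have hA : 0 < α₁ * α₂ := by positivity
  have hr2 : 0 < r ^ 2 := by positivity
  have hcoef : 0 ≤ r ^ 2 * (g / 2) * D⁻¹ := by positivity
  rcases le_or_gt (α₁ * α₂) (2 * K ^ 2) with hcase | hcase
  · have hab : r ^ 2 ≤ 2 * K ^ 2 * r ^ 2 / (α₁ * α₂) := by
      rw [le_div_iff₀ hA]; nlinarith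
    have hb : 0 < 2 * K ^ 2 * r ^ 2 / (α₁ * α₂) := by positivity
    have hmain := gF_main d hd μ₁ μ₂ (B := 16 * D ^ 2 * (α₁ * α₂) / g ^ 2) hr2 hab
      (by positivity) ?_
    · have h2 := hmain.trans (add_le_add (hN hb) le_rfl)
      refine (mul_le_mul_of_nonneg_left h2 hcoef).trans ?_
      have e1 : r ^ 2 * (g / 2) * D⁻¹ * (2 / (2 * K ^ 2 * r ^ 2 / (α₁ * α₂) * g) * D +
          16 * D ^ 2 * (α₁ * α₂) / g ^ 2 / r ^ 2) =
          1 * (1 / (2 * K ^ 2) * (α₁ * α₂)) + 8 * D / g * (α₁ * α₂) := by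
        field_simp
        try ring
      have e2 : 8 / g * D * (1 + 1 / (2 * K ^ 2)) * α₁ * α₂ =
          8 * D / g * (1 / (2 * K ^ 2) * (α₁ * α₂)) + 8 * D / g * (α₁ * α₂) := by ring
      rw [e1, e2]
      gcongr
    · intro y hy
      have hy0 : 0 < y := hr2.trans hy.1
      have ht0 : 0 < √(y / 2) := by positivity
      have ht2 : √(y / 2) ^ 2 = y / 2 := Real.sq_sqrt (by positivity)
      have hmem : √(y / 2) ∈ Set.Icc (r / Real.sqrt 2)
          (K * α₁ ^ (-(1 : ℝ) / 2) * α₂ ^ (-(1 : ℝ) / 2) * r) := by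
        constructor
        · apply Real.le_sqrt_of_sq_le
          rw [div_pow, Real.sq_sqrt (by norm_num)]
          linarith [hy.1]
        · apply Real.sqrt_le_iff.2
          refine ⟨by positivity, ?_⟩
          have s : ∀ a : ℝ, 0 < a → (a ^ (-(1 : ℝ) / 2)) ^ 2 = a⁻¹ := by
            intro a ha
            rw [← Real.rpow_natCast, ← Real.rpow_mul ha.le, ← Real.rpow_neg_one]
            norm_num
          rw [mul_pow, mul_pow, mul_pow, s _ hα₁, s _ hα₂]
          have := hy.2
          have e : K ^ 2 * α₁⁻¹ * α₂⁻¹ * r ^ 2 = 2 * K ^ 2 * r ^ 2 / (α₁ * α₂) / 2 := by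
            field_simp
          rw [e]; linarith
      obtain ⟨q1, q2⟩ := h _ hmem
      rw [hdet _ _ ht0, ht2] at q1 q2
      have n1 : 0 ≤ ∫ x, |gF d μ₁ (y / 2) x| := integral_nonneg fun _ => abs_nonneg _
      have n2 : 0 ≤ ∫ x, |gF d μ₂ (y / 2) x| := integral_nonneg fun _ => abs_nonneg _
      generalize (∫ x, |gF d μ₁ (y / 2) x|) = N₁ at *
      generalize (∫ x, |gF d μ₂ (y / 2) x|) = N₂ at *
      have hc : 0 < y / 2 * (g / 2) * D⁻¹ := by positivity
      have q3 : (y / 2 * (g / 2) * D⁻¹ * N₁) * (y / 2 * (g / 2) * D⁻¹ * N₂) ≤ α₁ * α₂ :=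
        mul_le_mul q1 q2 (by positivity) hα₁.le
      rw [le_div_iff₀ (by positivity), le_div_iff₀ (by positivity)]
      have q4 := mul_le_mul_of_nonneg_left q3 (by positivity : 0 ≤ 16 * D ^ 2)
      refine le_trans (le_of_eq ?_) q4
      field_simp
      try ring
  · have h2 := hN hr2
    refine (mul_le_mul_of_nonneg_left h2 hcoef).trans ?_
    have e1 : r ^ 2 * (g / 2) * D⁻¹ * (2 / (r ^ 2 * g) * D) = 1 := by field_simp
    have e2 : 8 / g * D * (1 + 1 / (2 * K ^ 2)) * α₁ * α₂ =
          8 * D / g * ((α₁ * α₂) / (2 * K ^ 2)) + 8 * D / g * (α₁ * α₂) := by ring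
    rw [e1, e2]
    have h3 : 1 ≤ (α₁ * α₂) / (2 * K ^ 2) := by
      rw [le_div_iff₀ (by positivity)]; linarith
    have h4 : 1 ≤ 8 * D / g * ((α₁ * α₂) / (2 * K ^ 2)) := one_le_mul_of_one_le_of_one_le h1 h3
    have h5 : 0 ≤ 8 * D / g * (α₁ * α₂) := by positivity
    linarith
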